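/- arXiv:2111.07061 — 4 statements merged into one kernel-verified Lean document; each statement's English description precedes it below -/
import Mathlib

section
/- Let k_P, k_I, k_D be strictly positive real numbers, let K be a real number with 0 < K < 2, set δ = K − 1 and σ = 2 K k_I, and suppose k_D³ > k_I/(1 − δ²) and k_P > 2 K k_D². Then the symmetric matrix Q = [[2(k_P k_I/k_D² − σ), 0, 0], [0, 2(k_D − k_I/k_D²), 2k_I − σ], [0, 2k_I − σ, 2k_I²/k_D]] is positive definite. -/
theorem aux_posDef (a b c d : ℝ) (ha : 0 < a) (hc : 0 < c) (h : 0 < b * c - d ^ 2) :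
    (!![a, 0, 0; 0, b, d; 0, d, c] : Matrix (Fin 3) (Fin 3) ℝ).PosDef := by
  refine Matrix.PosDef.of_dotProduct_mulVec_pos ?_ fun x hx => ?_
  · ext i j
    fin_cases i <;> fin_cases j <;> simp [Matrix.conjTranspose]
  · have e : star x ⬝ᵥ ((!![a, 0, 0; 0, b, d; 0, d, c] : Matrix (Fin 3) (Fin 3) ℝ).mulVec x)
        = a * x 0 ^ 2 + ((b * c - d ^ 2) * x 1 ^ 2 + (d * x 1 + c * x 2) ^ 2) / c := by
      simp [Matrix.mulVec, dotProduct, Fin.sum_univ_three]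
      field_simp
      ring
    rw [e]
    by_cases h0 : x 0 = 0
    · by_cases h1 : x 1 = 0
      · have h2 : x 2 ≠ 0 := by
          intro h2
          apply hx
          ext i
          fin_cases i <;> simp [h0, h1, h2]
        rw [h0, h1]
        have : 0 < (d * 0 + c * x 2) ^ 2 := by
          have : c * x 2 ≠ 0 := mul_ne_zero hc.ne' h2
          rw [mul_zero, zero_add]
          positivity
        simp only [ne_eq, OfNat.ofNat_ne_zero, not_false_eq_true, zero_pow, mul_zero, zero_add] at this ⊢
        positivity
      · positivity
    · positivity

theorem stmt_4 (kP kI kD K : ℝ) (hkP : 0 < kP) (hkI : 0 < kI) (hkD : 0 < kD)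
    (hK0 : 0 < K) (hK2 : K < 2) (δ σ : ℝ) (hδ : δ = K - 1) (hσ : σ = 2 * K * kI)
    (hD : kD ^ 3 > kI / (1 - δ ^ 2)) (hP : kP > 2 * K * kD ^ 2) :
    (!![2 * (kP * kI / kD ^ 2 - σ), 0, 0;
        0, 2 * (kD - kI / kD ^ 2), 2 * kI - σ;
        0, 2 * kI - σ, 2 * kI ^ 2 / kD] : Matrix (Fin 3) (Fin 3) ℝ).PosDef := by
  have hd : 0 < 1 - δ ^ 2 := by
    subst hδ
    nlinarith
  have hD' : 0 < kD ^ 3 * (1 - δ ^ 2) - kI := by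
    have := (div_lt_iff₀ hd).1 hD
    linarith
  apply aux_posDef
  · have e : 2 * (kP * kI / kD ^ 2 - σ) = 2 * kI * (kP - 2 * K * kD ^ 2) / kD ^ 2 := by
      rw [hσ]
      field_simp
    rw [e]
    have := sub_pos.2 hP
    positivity
  · positivity
  · have e : 2 * (kD - kI / kD ^ 2) * (2 * kI ^ 2 / kD) - (2 * kI - σ) ^ 2
        = 4 * kI ^ 2 * (kD ^ 3 * (1 - δ ^ 2) - kI) / kD ^ 3 := by
      rw [hσ, hδ]
      field_simp
      ring
    rw [e]
    positivity
end

section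
/- Let n ≥ 1 and let k_P, k_D, k_I, α, β, γ, σ be real numbers such that both the matrix P = [[k_P, α, σ], [α, 1, β], [σ, β, γ]] and the matrix Q = [[2(k_P α − σ), k_D α − β, k_I α + k_P β − γ], [k_D α − β, 2(k_D − α), k_I + β k_D − σ], [k_I α + k_P β − γ, k_I + β k_D − σ, 2 β k_I]] are positive definite. Then there exist constants C > 0 and λ > 0, depending only on the gains and these matrices, such that every solution e, z : ℝ → ℝⁿ of the closed-loop system ż(t) = e(t), ë(t) = −k_P e(t) − k_D ė(t) − k_I z(t) satisfies ‖e(t)‖ + ‖ė(t)‖ + ‖z(t)‖ ≤ C·(‖e(0)‖ + ‖ė(0)‖ + ‖z(0)‖)·exp(−λ t) for all t ≥ 0; in particular e(t), ė(t) and z(t) all tend to 0 as t → ∞. -/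
theorem aux_qf (a b c d e f : ℝ)
    (h : (!![a, d, e; d, b, f; e, f, c] : Matrix (Fin 3) (Fin 3) ℝ).PosDef) :
    ∃ m > (0 : ℝ), ∀ x y z : ℝ, m * (x ^ 2 + y ^ 2 + z ^ 2) ≤
      a * x ^ 2 + b * y ^ 2 + c * z ^ 2 + 2 * d * x * y + 2 * e * x * z + 2 * f * y * z := by
  have hpos : ∀ x y z : ℝ, (x ^ 2 + y ^ 2 + z ^ 2 ≠ 0) →
      0 < a * x ^ 2 + b * y ^ 2 + c * z ^ 2 + 2 * d * x * y + 2 * e * x * z + 2 * f * y * z := by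
    intro x y z hne
    have hv : (![x, y, z] : Fin 3 → ℝ) ≠ 0 := by
      intro h0
      have h1 := congrFun h0 0
      have h2 := congrFun h0 1
      have h3 := congrFun h0 2
      simp at h1 h2 h3
      apply hne
      rw [h1, h2, h3]; norm_num
    have := h.dotProduct_mulVec_pos hv
    simp [Matrix.mulVec, dotProduct, Fin.sum_univ_three] at this
    linarith
  let S : Set (EuclideanSpace ℝ (Fin 3)) := Metric.sphere 0 1
  have hS : IsCompact S := isCompact_sphere 0 1
  have hSne : S.Nonempty := NormedSpace.sphere_nonempty.mpr zero_le_one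
  obtain ⟨w, hw, hmin⟩ := hS.exists_isMinOn hSne
    (f := fun w : EuclideanSpace ℝ (Fin 3) => a * w 0 ^ 2 + b * w 1 ^ 2 + c * w 2 ^ 2
      + 2 * d * w 0 * w 1 + 2 * e * w 0 * w 2 + 2 * f * w 1 * w 2)
    (by fun_prop)
  have hsq : ∀ u : EuclideanSpace ℝ (Fin 3), u ∈ S ↔ u 0 ^ 2 + u 1 ^ 2 + u 2 ^ 2 = 1 := by
    intro u
    have h1 := EuclideanSpace.real_norm_sq_eq u
    rw [Fin.sum_univ_three] at h1
    rw [← h1]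
    simp only [S, mem_sphere_zero_iff_norm]
    constructor
    · intro h; rw [h]; norm_num
    · intro h
      have := norm_nonneg u
      nlinarith
  refine ⟨_, hpos (w 0) (w 1) (w 2) (by rw [(hsq w).1 hw]; norm_num), ?_⟩
  intro x y z
  by_cases hne : x ^ 2 + y ^ 2 + z ^ 2 = 0
  · have hx : x = 0 := by nlinarith [sq_nonneg x, sq_nonneg y, sq_nonneg z]
    have hy : y = 0 := by nlinarith [sq_nonneg x, sq_nonneg y, sq_nonneg z]
    have hz : z = 0 := by nlinarith [sq_nonneg x, sq_nonneg y, sq_nonneg z]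
    subst hx hy hz
    simp
  have hq : 0 < x ^ 2 + y ^ 2 + z ^ 2 := lt_of_le_of_ne (by positivity) (Ne.symm hne)
  obtain ⟨s, hs, hss⟩ : ∃ s > 0, s ^ 2 = x ^ 2 + y ^ 2 + z ^ 2 :=
    ⟨_, Real.sqrt_pos.2 hq, Real.sq_sqrt hq.le⟩
  have hmem : (!₂[x / s, y / s, z / s] : EuclideanSpace ℝ (Fin 3)) ∈ S := by
    rw [hsq]
    simp
    field_simp
    exact hss.symm
  have := hmin hmem
  simp only [Set.mem_setOf_eq] at this
  simp at this
  rw [← hss]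
  refine (mul_le_mul_of_nonneg_right this (sq_nonneg s)).trans (le_of_eq ?_)
  field_simp

theorem aux_up (a b c d e f : ℝ) : ∃ M > (0 : ℝ), ∀ x y z : ℝ,
      a * x ^ 2 + b * y ^ 2 + c * z ^ 2 + 2 * d * x * y + 2 * e * x * z + 2 * f * y * z
      ≤ M * (x ^ 2 + y ^ 2 + z ^ 2) := by
  refine ⟨|a| + |b| + |c| + |d| + |e| + |f| + 1, by positivity, ?_⟩
  intro x y z
  have h2 : ∀ d x y : ℝ, 2 * d * x * y ≤ |d| * (x ^ 2 + y ^ 2) := by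
    intro d x y
    have h1 := le_abs_self d
    have h3 := neg_abs_le d
    nlinarith [mul_nonneg (sub_nonneg.2 h1) (sq_nonneg (x - y)),
      mul_nonneg (by linarith : 0 ≤ |d| + d) (sq_nonneg (x - y)),
      mul_nonneg (sub_nonneg.2 h1) (sq_nonneg (x + y))]
  have hx := sq_nonneg x
  have hy := sq_nonneg y
  have hz := sq_nonneg z
  have k1 := mul_le_mul_of_nonneg_right (le_abs_self a) hx
  have k2 := mul_le_mul_of_nonneg_right (le_abs_self b) hy
  have k3 := mul_le_mul_of_nonneg_right (le_abs_self c) hz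
  have := h2 d x y
  have := h2 e x z
  have := h2 f y z
  have a1 := mul_nonneg (abs_nonneg a) (add_nonneg hy hz)
  have a2 := mul_nonneg (abs_nonneg b) (add_nonneg hx hz)
  have a3 := mul_nonneg (abs_nonneg c) (add_nonneg hx hy)
  have a4 := mul_nonneg (abs_nonneg d) hz
  have a5 := mul_nonneg (abs_nonneg e) hy
  have a6 := mul_nonneg (abs_nonneg f) hx
  linarith

theorem aux_scalar (kP kD kI α β γ σ : ℝ)
    (hP : (!![kP, α, σ; α, 1, β; σ, β, γ] : Matrix (Fin 3) (Fin 3) ℝ).PosDef)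
    (hQ : (!![2 * (kP * α - σ), kD * α - β, kI * α + kP * β - γ;
              kD * α - β, 2 * (kD - α), kI + β * kD - σ;
              kI * α + kP * β - γ, kI + β * kD - σ, 2 * β * kI] :
            Matrix (Fin 3) (Fin 3) ℝ).PosDef) :
    ∃ K > (0 : ℝ), ∃ mu > (0 : ℝ), ∀ e v z : ℝ → ℝ,
      (∀ t, HasDerivAt e (v t) t) →
      (∀ t, HasDerivAt v (-(kP * e t) - kD * v t - kI * z t) t) →
      (∀ t, HasDerivAt z (e t) t) →
      ∀ t ≥ (0 : ℝ), e t ^ 2 + v t ^ 2 + z t ^ 2 ≤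
        K * (e 0 ^ 2 + v 0 ^ 2 + z 0 ^ 2) * Real.exp (-mu * t) := by
  obtain ⟨p, hp, hp'⟩ := aux_qf _ _ _ _ _ _ hP
  obtain ⟨q, hq, hq'⟩ := aux_qf _ _ _ _ _ _ hQ
  obtain ⟨M, hM, hM'⟩ := aux_up kP 1 γ α σ β
  refine ⟨M / p, by positivity, q / M, by positivity, ?_⟩
  intro e v z he hv hz t ht
  let V : ℝ → ℝ := fun t => kP * e t ^ 2 + 1 * v t ^ 2 + γ * z t ^ 2 + 2 * α * e t * v t
    + 2 * σ * e t * z t + 2 * β * v t * z t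
  let D : ℝ → ℝ := fun t => -(2 * (kP * α - σ) * e t ^ 2 + 2 * (kD - α) * v t ^ 2
    + 2 * β * kI * z t ^ 2 + 2 * (kD * α - β) * e t * v t
    + 2 * (kI * α + kP * β - γ) * e t * z t + 2 * (kI + β * kD - σ) * v t * z t)
  have hV : ∀ t, HasDerivAt V (D t) t := by
    intro t
    have := (((((((he t).pow 2).const_mul kP).add (((hv t).pow 2).const_mul 1)).add
      (((hz t).pow 2).const_mul γ)).add (((he t).const_mul (2 * α)).mul (hv t))).add
      (((he t).const_mul (2 * σ)).mul (hz t))).add (((hv t).const_mul (2 * β)).mul (hz t))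
    refine this.congr_deriv ?_
    simp only [D]
    norm_num
    ring
  have hVD : ∀ t, D t + q / M * V t ≤ 0 := by
    intro t
    have h1 := hq' (e t) (v t) (z t)
    have h2 := mul_le_mul_of_nonneg_left (hM' (e t) (v t) (z t)) (by positivity : 0 ≤ q / M)
    have h3 : q / M * (M * (e t ^ 2 + v t ^ 2 + z t ^ 2)) = q * (e t ^ 2 + v t ^ 2 + z t ^ 2) := by
      field_simp
    rw [h3] at h2
    simp only [D, V]
    linarith
  have hg : ∀ t, HasDerivAt (fun t => V t * Real.exp (q / M * t))
      ((D t + q / M * V t) * Real.exp (q / M * t)) t := by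
    intro t
    have := (hV t).mul (((hasDerivAt_id t).const_mul (q / M)).exp)
    refine this.congr_deriv ?_
    simp
    ring
  have hanti : Antitone (fun t => V t * Real.exp (q / M * t)) :=
    antitone_of_hasDerivAt_nonpos hg
      (fun t => mul_nonpos_of_nonpos_of_nonneg (hVD t) (Real.exp_pos _).le)
  have h0 := hanti ht
  simp only [mul_zero, Real.exp_zero, mul_one] at h0
  have h1 : V t ≤ V 0 * Real.exp (-(q / M) * t) := by
    rw [neg_mul, Real.exp_neg, ← div_eq_mul_inv, le_div_iff₀ (Real.exp_pos _)]
    exact h0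
  have h2 := hp' (e t) (v t) (z t)
  have h3 := mul_le_mul_of_nonneg_right (hM' (e 0) (v 0) (z 0))
    (Real.exp_pos (-(q / M) * t)).le
  have h4 := (h2.trans h1).trans h3
  rw [mul_comm p, ← le_div_iff₀ hp] at h4
  refine h4.trans (le_of_eq ?_)
  ring


theorem stmt_5 (n : ℕ) (hn : 1 ≤ n) (kP kD kI α β γ σ : ℝ)
    (hP : (!![kP, α, σ; α, 1, β; σ, β, γ] : Matrix (Fin 3) (Fin 3) ℝ).PosDef)
    (hQ : (!![2 * (kP * α - σ), kD * α - β, kI * α + kP * β - γ;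
              kD * α - β, 2 * (kD - α), kI + β * kD - σ;
              kI * α + kP * β - γ, kI + β * kD - σ, 2 * β * kI] :
            Matrix (Fin 3) (Fin 3) ℝ).PosDef) :
    ∃ C > (0 : ℝ), ∃ lam > (0 : ℝ),
      ∀ e e' z : ℝ → EuclideanSpace ℝ (Fin n),
        (∀ t, HasDerivAt e (e' t) t) →
        (∀ t, HasDerivAt e' (-(kP • e t) - kD • e' t - kI • z t) t) →
        (∀ t, HasDerivAt z (e t) t) →
        (∀ t ≥ (0 : ℝ),
            ‖e t‖ + ‖e' t‖ + ‖z t‖ ≤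
              C * (‖e 0‖ + ‖e' 0‖ + ‖z 0‖) * Real.exp (-lam * t)) ∧
          Filter.Tendsto e Filter.atTop (nhds 0) ∧
          Filter.Tendsto e' Filter.atTop (nhds 0) ∧
          Filter.Tendsto z Filter.atTop (nhds 0) := by
  obtain ⟨K, hK, mu, hmu, H⟩ := aux_scalar kP kD kI α β γ σ hP hQ
  refine ⟨Real.sqrt (3 * K), by positivity, mu / 2, by positivity, ?_⟩
  intro e v z he hv hz
  have hproj : ∀ (i : Fin n) (f : ℝ → EuclideanSpace ℝ (Fin n)) (f' : EuclideanSpace ℝ (Fin n))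
      (t : ℝ), HasDerivAt f f' t → HasDerivAt (fun t => f t i) (f' i) t := by
    intro i f f' t h
    exact (EuclideanSpace.proj (𝕜 := ℝ) i).hasFDerivAt.comp_hasDerivAt t h
  have main : ∀ t ≥ (0 : ℝ), ‖e t‖ + ‖v t‖ + ‖z t‖ ≤
      Real.sqrt (3 * K) * (‖e 0‖ + ‖v 0‖ + ‖z 0‖) * Real.exp (-(mu / 2) * t) := by
    intro t ht
    have hsum : ‖e t‖ ^ 2 + ‖v t‖ ^ 2 + ‖z t‖ ^ 2 ≤
        K * (‖e 0‖ ^ 2 + ‖v 0‖ ^ 2 + ‖z 0‖ ^ 2) * Real.exp (-mu * t) := by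
      simp only [EuclideanSpace.real_norm_sq_eq, ← Finset.sum_add_distrib, Finset.mul_sum,
        Finset.sum_mul]
      refine Finset.sum_le_sum fun i _ => ?_
      refine H (fun t => e t i) (fun t => v t i) (fun t => z t i) (fun t => hproj i _ _ t (he t))
        (fun t => ?_) (fun t => hproj i _ _ t (hz t)) t ht
      have := hproj i _ _ t (hv t)
      simpa using this
    have hexp : Real.exp (-mu * t) = Real.exp (-(mu / 2) * t) ^ 2 := by
      rw [← Real.exp_nat_mul]; congr 1; push_cast; ring
    rw [hexp] at hsum
    have hE := Real.exp_pos (-(mu / 2) * t)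
    generalize Real.exp (-(mu / 2) * t) = E at *
    refine le_of_sq_le_sq ?_ (by positivity)
    rw [mul_pow, mul_pow, Real.sq_sqrt (by positivity)]
    have a1 : (‖e t‖ + ‖v t‖ + ‖z t‖) ^ 2 ≤ 3 * (‖e t‖ ^ 2 + ‖v t‖ ^ 2 + ‖z t‖ ^ 2) := by
      nlinarith [sq_nonneg (‖e t‖ - ‖v t‖), sq_nonneg (‖e t‖ - ‖z t‖), sq_nonneg (‖v t‖ - ‖z t‖)]
    have a2 : ‖e 0‖ ^ 2 + ‖v 0‖ ^ 2 + ‖z 0‖ ^ 2 ≤ (‖e 0‖ + ‖v 0‖ + ‖z 0‖) ^ 2 := by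
      have := mul_nonneg (norm_nonneg (e 0)) (norm_nonneg (v 0))
      have := mul_nonneg (norm_nonneg (e 0)) (norm_nonneg (z 0))
      have := mul_nonneg (norm_nonneg (v 0)) (norm_nonneg (z 0))
      nlinarith
    have a3 := mul_le_mul_of_nonneg_left a2 (by positivity : 0 ≤ 3 * K * E ^ 2)
    linarith
  have hlim : Filter.Tendsto (fun t : ℝ => Real.sqrt (3 * K) * (‖e 0‖ + ‖v 0‖ + ‖z 0‖) *
      Real.exp (-(mu / 2) * t)) Filter.atTop (nhds 0) := by
    have h1 : Filter.Tendsto (fun t : ℝ => -(mu / 2) * t) Filter.atTop Filter.atBot :=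
      Filter.tendsto_id.const_mul_atTop_of_neg (by linarith)
    simpa using (Real.tendsto_exp_atBot.comp h1).const_mul
      (Real.sqrt (3 * K) * (‖e 0‖ + ‖v 0‖ + ‖z 0‖))
  have key : ∀ f : ℝ → EuclideanSpace ℝ (Fin n),
      (∀ t, ‖f t‖ ≤ ‖e t‖ + ‖v t‖ + ‖z t‖) → Filter.Tendsto f Filter.atTop (nhds 0) := by
    intro f hf
    refine squeeze_zero_norm' ?_ hlim
    filter_upwards [Filter.eventually_ge_atTop (0 : ℝ)] with t ht
    exact (hf t).trans (main t ht)
  refine ⟨main, key _ fun t => ?_, key _ fun t => ?_, key _ fun t => ?_⟩ <;>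
    linarith [norm_nonneg (e t), norm_nonneg (v t), norm_nonneg (z t)]
end

section
/- Let n ≥ 1, let d ∈ ℝⁿ be a constant disturbance, and let k_P, k_D, k_I, α, β, γ, σ be real numbers with k_I ≠ 0 such that both P = [[k_P, α, σ], [α, 1, β], [σ, β, γ]] and Q = [[2(k_P α − σ), k_D α − β, k_I α + k_P β − γ], [k_D α − β, 2(k_D − α), k_I + β k_D − σ], [k_I α + k_P β − γ, k_I + β k_D − σ, 2 β k_I]] are positive definite. Then every solution e, z : ℝ → ℝⁿ of the disturbed closed-loop system ż(t) = e(t), ë(t) = d − k_P e(t) − k_D ė(t) − k_I z(t) satisfies: e(t) → 0, ė(t) → 0, and z(t) → (1/k_I)·d as t → ∞. -/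
theorem aux_pd (p q r s t u : ℝ)
    (h : (!![p, q, r; q, s, t; r, t, u] : Matrix (Fin 3) (Fin 3) ℝ).PosDef) :
    ∃ c : ℝ, 0 < c ∧ ∀ x y z : ℝ, c * (x ^ 2 + y ^ 2 + z ^ 2) ≤
      p * x ^ 2 + s * y ^ 2 + u * z ^ 2 + 2 * q * (x * y) + 2 * r * (x * z) + 2 * t * (y * z) := by
  have hpos : ∀ x y z : ℝ, x ^ 2 + y ^ 2 + z ^ 2 ≠ 0 → 0 <
      p * x ^ 2 + s * y ^ 2 + u * z ^ 2 + 2 * q * (x * y) + 2 * r * (x * z) + 2 * t * (y * z) := by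
    intro x y z hne
    have hv : (![x, y, z] : Fin 3 → ℝ) ≠ 0 := by
      intro h0
      apply hne
      have h1 := congrFun h0 0
      have h2 := congrFun h0 1
      have h3 := congrFun h0 2
      simp at h1 h2 h3
      simp [h1, h2, h3]
    have := h.dotProduct_mulVec_pos hv
    simp [Matrix.mulVec, dotProduct, Fin.sum_univ_three] at this
    nlinarith [this]
  let f : EuclideanSpace ℝ (Fin 3) → ℝ := fun w =>
    p * w 0 ^ 2 + s * w 1 ^ 2 + u * w 2 ^ 2 + 2 * q * (w 0 * w 1) + 2 * r * (w 0 * w 2)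
      + 2 * t * (w 1 * w 2)
  have hf : Continuous f := by fun_prop
  have hS : IsCompact (Metric.sphere (0 : EuclideanSpace ℝ (Fin 3)) 1) := isCompact_sphere _ _
  have hSn : (Metric.sphere (0 : EuclideanSpace ℝ (Fin 3)) 1).Nonempty :=
    NormedSpace.sphere_nonempty.2 zero_le_one
  obtain ⟨w, hw, hmin⟩ := hS.exists_isMinOn hSn hf.continuousOn
  have hnorm : ∀ w : EuclideanSpace ℝ (Fin 3),
      w ∈ Metric.sphere (0 : EuclideanSpace ℝ (Fin 3)) 1 ↔ w 0 ^ 2 + w 1 ^ 2 + w 2 ^ 2 = 1 := by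
    intro w
    have : ‖w‖ ^ 2 = w 0 ^ 2 + w 1 ^ 2 + w 2 ^ 2 := by
      rw [EuclideanSpace.real_norm_sq_eq, Fin.sum_univ_three]
    rw [mem_sphere_zero_iff_norm, ← this]
    constructor
    · intro h; simp [h]
    · intro h
      have := norm_nonneg w
      nlinarith
  refine ⟨f w, hpos _ _ _ (by rw [(hnorm w).1 hw]; norm_num), ?_⟩
  intro x y z
  by_cases hne : x ^ 2 + y ^ 2 + z ^ 2 = 0
  · have hx : x = 0 := by nlinarith [sq_nonneg x, sq_nonneg y, sq_nonneg z]
    have hy : y = 0 := by nlinarith [sq_nonneg x, sq_nonneg y, sq_nonneg z]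
    have hz : z = 0 := by nlinarith [sq_nonneg x, sq_nonneg y, sq_nonneg z]
    simp [hx, hy, hz]
  · have hN : 0 < x ^ 2 + y ^ 2 + z ^ 2 := lt_of_le_of_ne (by positivity) (Ne.symm hne)
    obtain ⟨ρ, hρ, hρ2⟩ : ∃ ρ : ℝ, 0 < ρ ∧ ρ ^ 2 = x ^ 2 + y ^ 2 + z ^ 2 :=
      ⟨√(x ^ 2 + y ^ 2 + z ^ 2), Real.sqrt_pos.2 hN, Real.sq_sqrt hN.le⟩
    have hm : (!₂[x / ρ, y / ρ, z / ρ] : EuclideanSpace ℝ (Fin 3)) ∈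
        Metric.sphere (0 : EuclideanSpace ℝ (Fin 3)) 1 := by
      rw [hnorm]
      simp
      field_simp
      linarith
    have h1 : f w ≤ f !₂[x / ρ, y / ρ, z / ρ] := hmin hm
    have h2 : f !₂[x / ρ, y / ρ, z / ρ] = (p * x ^ 2 + s * y ^ 2 + u * z ^ 2 + 2 * q * (x * y)
        + 2 * r * (x * z) + 2 * t * (y * z)) / ρ ^ 2 := by
      simp [f]
      field_simp
    rw [h2, le_div_iff₀ (by positivity), hρ2] at h1
    exact h1

theorem aux_scalar_s6 (kP kD kI α β γ σ : ℝ)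
    (hP : (!![kP, α, σ; α, 1, β; σ, β, γ] : Matrix (Fin 3) (Fin 3) ℝ).PosDef)
    (hQ : (!![2 * (kP * α - σ), kD * α - β, kI * α + kP * β - γ;
              kD * α - β, 2 * (kD - α), kI + β * kD - σ;
              kI * α + kP * β - γ, kI + β * kD - σ, 2 * β * kI] :
            Matrix (Fin 3) (Fin 3) ℝ).PosDef)
    (e v y : ℝ → ℝ) (he : ∀ t, HasDerivAt e (v t) t)
    (hv : ∀ t, HasDerivAt v (- kP * e t - kD * v t - kI * y t) t)
    (hy : ∀ t, HasDerivAt y (e t) t) :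
    Filter.Tendsto e Filter.atTop (nhds 0) ∧ Filter.Tendsto v Filter.atTop (nhds 0) ∧
      Filter.Tendsto y Filter.atTop (nhds 0) := by
  obtain ⟨c, hc, hPc⟩ := aux_pd _ _ _ _ _ _ hP
  obtain ⟨m, hm, hQm⟩ := aux_pd _ _ _ _ _ _ hQ
  let W : ℝ → ℝ := fun t => kP * e t ^ 2 + 1 * v t ^ 2 + γ * y t ^ 2 + 2 * α * (e t * v t)
    + 2 * σ * (e t * y t) + 2 * β * (v t * y t)
  let N : ℝ → ℝ := fun t => e t ^ 2 + v t ^ 2 + y t ^ 2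
  let C : ℝ := |kP| + 1 + |γ| + 2 * |α| + 2 * |σ| + 2 * |β|
  have hC : 0 < C := by positivity
  have hup : ∀ t, W t ≤ C * N t := by
    intro t
    have key : ∀ k a N : ℝ, |a| ≤ N → k * a ≤ |k| * N := fun k a N h =>
      (le_abs_self _).trans (by rw [abs_mul]; gcongr)
    have h1 := key kP (e t ^ 2) (N t) (by
      rw [abs_of_nonneg (sq_nonneg _)]; simp only [N]; nlinarith [sq_nonneg (v t), sq_nonneg (y t)])
    have h2 := key γ (y t ^ 2) (N t) (by
      rw [abs_of_nonneg (sq_nonneg _)]; simp only [N]; nlinarith [sq_nonneg (v t), sq_nonneg (e t)])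
    have h3 := key α (e t * v t) (N t) (by
      rw [abs_le]; simp only [N]
      constructor <;> nlinarith [sq_nonneg (e t + v t), sq_nonneg (e t - v t), sq_nonneg (y t), sq_nonneg (e t), sq_nonneg (v t)])
    have h4 := key σ (e t * y t) (N t) (by
      rw [abs_le]; simp only [N]
      constructor <;> nlinarith [sq_nonneg (e t + y t), sq_nonneg (e t - y t), sq_nonneg (y t), sq_nonneg (e t), sq_nonneg (v t)])
    have h5 := key β (v t * y t) (N t) (by
      rw [abs_le]; simp only [N]
      constructor <;> nlinarith [sq_nonneg (v t + y t), sq_nonneg (v t - y t), sq_nonneg (y t), sq_nonneg (e t), sq_nonneg (v t)])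
    have h6 : v t ^ 2 ≤ N t := by simp only [N]; nlinarith [sq_nonneg (e t), sq_nonneg (y t)]
    simp only [W, C]
    linarith
  let Z : ℝ → ℝ := fun t => 2 * (kP * α - σ) * e t ^ 2 + 2 * (kD - α) * v t ^ 2
    + 2 * β * kI * y t ^ 2 + 2 * (kD * α - β) * (e t * v t)
    + 2 * (kI * α + kP * β - γ) * (e t * y t) + 2 * (kI + β * kD - σ) * (v t * y t)
  have hZ : ∀ t, m * N t ≤ Z t := fun t => hQm _ _ _
  have hW : ∀ t, HasDerivAt W (-Z t) t := by
    intro t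
    have := (((((((he t).pow 2).const_mul kP).add (((hv t).pow 2).const_mul 1)).add
      (((hy t).pow 2).const_mul γ)).add (((he t).mul (hv t)).const_mul (2 * α))).add
      (((he t).mul (hy t)).const_mul (2 * σ))).add (((hv t).mul (hy t)).const_mul (2 * β))
    refine this.congr_deriv ?_
    simp only [Z]
    norm_num
    ring
  let k : ℝ := m / C
  have hk : 0 < k := div_pos hm hC
  have hG : ∀ t, HasDerivAt (fun t => W t * Real.exp (k * t))
      (-Z t * Real.exp (k * t) + W t * (Real.exp (k * t) * (k * 1))) t := fun t =>
    (hW t).mul (((hasDerivAt_id t).const_mul k).exp)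
  have hanti : Antitone (fun t => W t * Real.exp (k * t)) := by
    apply antitone_of_deriv_nonpos (fun t => (hG t).differentiableAt)
    intro t
    rw [(hG t).deriv]
    have h1 : k * W t ≤ Z t := by
      calc k * W t ≤ k * (C * N t) := by gcongr; exact hup t
        _ = m * N t := by simp only [k]; field_simp
        _ ≤ Z t := hZ t
    have := Real.exp_pos (k * t)
    nlinarith
  have hbd : ∀ t, 0 ≤ t → N t ≤ W 0 / c * Real.exp (-(k * t)) := by
    intro t ht
    have h1 := hanti ht
    simp only [mul_zero, Real.exp_zero, mul_one] at h1
    have h2 : c * N t ≤ W t := hPc _ _ _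
    have h3 : W t ≤ W 0 * Real.exp (-(k * t)) := by
      rw [Real.exp_neg, ← div_eq_mul_inv, le_div_iff₀ (Real.exp_pos _)]
      exact h1
    rw [div_mul_eq_mul_div, le_div_iff₀ hc]
    linarith
  have hlim : Filter.Tendsto (fun t => W 0 / c * Real.exp (-(k * t))) Filter.atTop (nhds 0) := by
    have := (Real.tendsto_exp_neg_atTop_nhds_zero.comp
      (Filter.tendsto_id.const_mul_atTop hk)).const_mul (W 0 / c)
    simpa using this
  have fin : ∀ g : ℝ → ℝ, (∀ t, g t ^ 2 ≤ N t) → Filter.Tendsto g Filter.atTop (nhds 0) := by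
    intro g hg
    have h2 : Filter.Tendsto (fun t => g t ^ 2) Filter.atTop (nhds 0) := by
      refine tendsto_of_tendsto_of_tendsto_of_le_of_le' tendsto_const_nhds hlim
        (Filter.Eventually.of_forall fun t => sq_nonneg _) ?_
      filter_upwards [Filter.eventually_ge_atTop 0] with t ht
      exact (hg t).trans (hbd t ht)
    have h3 := h2.sqrt
    simp only [Real.sqrt_sq_eq_abs, Real.sqrt_zero] at h3
    exact (tendsto_zero_iff_abs_tendsto_zero _).2 h3
  refine ⟨fin e fun t => ?_, fin v fun t => ?_, fin y fun t => ?_⟩ <;> simp only [N] <;>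
    nlinarith [sq_nonneg (e t), sq_nonneg (v t), sq_nonneg (y t)]

theorem aux_lim {n : ℕ} (f : ℝ → EuclideanSpace ℝ (Fin n)) (a : EuclideanSpace ℝ (Fin n))
    (h : ∀ i, Filter.Tendsto (fun t => f t i) Filter.atTop (nhds (a i))) :
    Filter.Tendsto f Filter.atTop (nhds a) := by
  have h1 : Filter.Tendsto (fun t => (f t).ofLp) Filter.atTop (nhds a.ofLp) :=
    tendsto_pi_nhds.2 h
  exact ((PiLp.continuous_toLp 2 (fun _ : Fin n => ℝ)).tendsto a.ofLp).comp h1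

theorem stmt_6 (n : ℕ) (hn : 1 ≤ n) (d : EuclideanSpace ℝ (Fin n))
    (kP kD kI α β γ σ : ℝ) (hkI : kI ≠ 0)
    (hP : (!![kP, α, σ; α, 1, β; σ, β, γ] : Matrix (Fin 3) (Fin 3) ℝ).PosDef)
    (hQ : (!![2 * (kP * α - σ), kD * α - β, kI * α + kP * β - γ;
              kD * α - β, 2 * (kD - α), kI + β * kD - σ;
              kI * α + kP * β - γ, kI + β * kD - σ, 2 * β * kI] :
            Matrix (Fin 3) (Fin 3) ℝ).PosDef) :
    ∀ e e' z : ℝ → EuclideanSpace ℝ (Fin n),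
      (∀ t, HasDerivAt e (e' t) t) →
      (∀ t, HasDerivAt e' (d - kP • e t - kD • e' t - kI • z t) t) →
      (∀ t, HasDerivAt z (e t) t) →
      Filter.Tendsto e Filter.atTop (nhds 0) ∧
        Filter.Tendsto e' Filter.atTop (nhds 0) ∧
        Filter.Tendsto z Filter.atTop (nhds ((1 / kI) • d)) := by
  intro e e' z he he' hz
  have hco : ∀ (f : ℝ → EuclideanSpace ℝ (Fin n)) (f' : EuclideanSpace ℝ (Fin n)) (t : ℝ)
      (i : Fin n), HasDerivAt f f' t → HasDerivAt (fun t => f t i) (f' i) t := by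
    intro f f' t i h
    exact ((EuclideanSpace.proj i : EuclideanSpace ℝ (Fin n) →L[ℝ] ℝ).hasFDerivAt).comp_hasDerivAt t h
  have key := fun i : Fin n => aux_scalar_s6 kP kD kI α β γ σ hP hQ (fun t => e t i)
    (fun t => e' t i) (fun t => z t i - (1 / kI) * d i) (fun t => hco _ _ t i (he t))
    (fun t => (hco _ _ t i (he' t)).congr_deriv (by simp; field_simp; ring))
    (fun t => (hco _ _ t i (hz t)).sub_const _)
  refine ⟨aux_lim _ _ fun i => (key i).1, aux_lim _ _ fun i => (key i).2.1,
    aux_lim _ _ fun i => ?_⟩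
  have := (key i).2.2.add_const ((1 / kI) * d i)
  simpa using this
end

section
/- Let E be a real Banach space, let Q : ℝ → (E →L[ℝ] E) be continuously differentiable with Q(t) ∘ Q(t) = Q(t) for all t, let u : ℝ → E be continuous with Q(t)(u(t)) = 0 for all t, and let w : ℝ → E be differentiable and satisfy w'(t) = u(t) − Q'(t)(w(t)) for all t. If Q(0)(w(0)) = 0, then Q(t)(w(t)) = 0 for all t ≥ 0. -/
theorem stmt_10 {E : Type*} [NormedAddCommGroup E] [NormedSpace ℝ E] [CompleteSpace E]
    (Q Q' : ℝ → (E →L[ℝ] E))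
    (hQ : ∀ t, HasDerivAt Q (Q' t) t) (hQ' : Continuous Q')
    (hidem : ∀ t, (Q t).comp (Q t) = Q t)
    (u : ℝ → E) (hu : Continuous u) (huD : ∀ t, Q t (u t) = 0)
    (w : ℝ → E) (hw : ∀ t, HasDerivAt w (u t - Q' t (w t)) t)
    (h0 : Q 0 (w 0) = 0) :
    ∀ t ≥ (0 : ℝ), Q t (w t) = 0 := by
  intro T hT
  have key : ∀ t x, Q' t x = Q' t (Q t x) + Q t (Q' t x) := by
    intro t x
    have h1 := (hQ t).clm_comp (hQ t)
    have h2 : (fun y => (Q y).comp (Q y)) = Q := funext hidem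
    rw [h2] at h1
    have h3 := (hQ t).unique h1
    have h4 := congrArg (fun A : E →L[ℝ] E => A x) h3
    simpa using h4
  have hy : ∀ t, HasDerivAt (fun s => Q s (w s)) (Q' t (Q t (w t))) t := by
    intro t
    have h1 := (hQ t).clm_apply (hw t)
    convert h1 using 1
    rw [map_sub, huD, zero_sub, ← sub_eq_add_neg, eq_sub_iff_add_eq]
    exact (key t (w t)).symm
  obtain ⟨K, hK⟩ := (isCompact_Icc (a := (0:ℝ)) (b := T)).exists_bound_of_continuousOn
    hQ'.continuousOn
  refine eq_zero_of_abs_deriv_le_mul_abs_self_of_eq_zero_right (f := fun s => Q s (w s)) (K := K)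
    (a := 0) (b := T) (fun t _ => (hy t).continuousAt.continuousWithinAt)
    (fun t _ => (hy t).hasDerivWithinAt) h0 ?_ T ⟨hT, le_rfl⟩
  intro t ht
  exact (Q' t).le_of_opNorm_le (hK t ⟨ht.1, ht.2.le⟩) _
end
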